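/- Fix 0 < R < Q and s > 0. Let A_{R,Q} = {p ∈ ℝ² : R ≤ ‖p‖ ≤ Q} and define γ : (0,∞) → ℝ by γ(c) = vol(A_{R,Q} ∩ B(p_c,s)). Suppose 0 < c ≤ c′ are such that both c and c′ satisfy the conditions (x + s > Q, s − x < R, x − s < R for x ∈ {c, c′}), and suppose γ′(c) > 0 and γ′(c′) > 0, where γ′ denotes the derivative of γ. Then γ′(c) ≥ γ′(c′). -/

import Mathlib

open Set MeasureTheory Metric

/-- The point `(c, 0)` in the Euclidean plane. -/
noncomputable def pc (c : ℝ) : EuclideanSpace ℝ (Fin 2) :=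
  (WithLp.equiv 2 (Fin 2 → ℝ)).symm ![c, 0]

/-!
The radical line of the circles of radius `ρ` about `O` and `s` about `(x, 0)` cuts the lens
`B(O, ρ) ∩ B((x, 0), s)` into two circular segments with the common chord as base. The signed
distances of that line from the two centres add up to `x`, so the area of the lens changes at rate
minus the length of the chord. Hence `γ'` is the length of the chord cut out of the inner circle
minus the length of the chord cut out of the outer one.

Where `γ' > 0`, the distance `x` of the centres satisfies `x² + s² < Q²`. There, as `x` decreases,
the squared outer half chord decreases while the difference of the squared half chords increases,
and concavity of the square root turns this into the claim.
-/

/-- The signed distance from the centre of a circle of radius `ρ` to its radical line with a circle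
of radius `s` whose centre is at distance `x`. At `x = 0` its value is `0`, as division by `0` gives
`0`. -/
noncomputable def radicalAbscissa (ρ s x : ℝ) : ℝ := (x ^ 2 + ρ ^ 2 - s ^ 2) / (2 * x)

/-- The squared half-length of the common chord of two circles of radii `ρ` and `s` whose centres
are at distance `x`; it is negative when the circles do not meet. -/
noncomputable def halfChordSq (ρ s x : ℝ) : ℝ := ρ ^ 2 - radicalAbscissa ρ s x ^ 2

/-- The area of the circular segment that a line at signed distance `d` from the centre cuts off
from a disc of radius `r`, on the side away from the centre if `0 ≤ d`. Outside the disc the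
integrand vanishes, because the square root of a negative number is `0`. -/
noncomputable def circularSegmentArea (r d : ℝ) : ℝ := 2 * ∫ t in Ioi d, √(r ^ 2 - t ^ 2)

theorem hasDerivAt_integral_Ioi {E : Type*} [NormedAddCommGroup E] [NormedSpace ℝ E]
    [CompleteSpace E] {f : ℝ → E} {a : ℝ} (hf : Integrable f) (ha : ContinuousAt f a) :
    HasDerivAt (fun u ↦ ∫ t in Ioi u, f t) (-f a) a := by
  have hsplit : (fun u ↦ ∫ t in Ioi u, f t) = fun u ↦ (∫ t in Ioi 0, f t) - ∫ t in 0..u, f t := by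
    funext u
    rw [← intervalIntegral.integral_Ioi_sub_Ioi' hf.integrableOn hf.integrableOn, sub_sub_cancel]
  rw [hsplit]
  exact (intervalIntegral.integral_hasDerivAt_right hf.intervalIntegrable
    hf.aestronglyMeasurable.stronglyMeasurableAtFilter ha).const_sub _

theorem integrable_sqrt_sq_sub_sq (r : ℝ) : Integrable fun t : ℝ ↦ √(r ^ 2 - t ^ 2) := by
  refine Continuous.integrable_of_hasCompactSupport (by fun_prop)
    (HasCompactSupport.intro (isCompact_Icc (a := -|r|) (b := |r|)) fun t ht ↦ ?_)
  rw [mem_Icc, ← abs_le, not_le] at ht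
  exact Real.sqrt_eq_zero'.2 (sub_nonpos.2 (sq_lt_sq.2 ht).le)

theorem hasDerivAt_circularSegmentArea (r d : ℝ) :
    HasDerivAt (circularSegmentArea r) (-(2 * √(r ^ 2 - d ^ 2))) d := by
  rw [← mul_neg]
  exact (hasDerivAt_integral_Ioi (integrable_sqrt_sq_sub_sq r) (by fun_prop)).const_mul 2

section RadicalLine

variable {ρ s x : ℝ}

theorem radicalAbscissa_add_comm (hx : x ≠ 0) :
    radicalAbscissa ρ s x + radicalAbscissa s ρ x = x := by
  unfold radicalAbscissa
  field_simp
  ring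

theorem halfChordSq_comm (hx : x ≠ 0) : halfChordSq ρ s x = halfChordSq s ρ x := by
  unfold halfChordSq radicalAbscissa
  field_simp
  ring

theorem differentiableAt_radicalAbscissa (hx : x ≠ 0) :
    DifferentiableAt ℝ (radicalAbscissa ρ s) x := by
  unfold radicalAbscissa
  fun_prop (disch := simpa)

-- The difference of the powers of a point with respect to two circles is affine in the point, with
-- the radical line as its zero set.
theorem sq_sub_sq_sub_sq_sub_sq_eq (hx : x ≠ 0) (t : ℝ) :
    s ^ 2 - (t - x) ^ 2 - (ρ ^ 2 - t ^ 2) = 2 * x * (t - radicalAbscissa ρ s x) := by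
  unfold radicalAbscissa
  field_simp
  ring

theorem sq_sub_sq_le_iff_radicalAbscissa_le (hx : 0 < x) (t : ℝ) :
    ρ ^ 2 - t ^ 2 ≤ s ^ 2 - (t - x) ^ 2 ↔ radicalAbscissa ρ s x ≤ t := by
  rw [← sub_nonneg, sq_sub_sq_sub_sq_sub_sq_eq hx.ne', mul_nonneg_iff_of_pos_left (by positivity),
    sub_nonneg]

theorem sq_sub_sq_le_iff_le_radicalAbscissa (hx : 0 < x) (t : ℝ) :
    s ^ 2 - (t - x) ^ 2 ≤ ρ ^ 2 - t ^ 2 ↔ t ≤ radicalAbscissa ρ s x := by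
  rw [← sub_nonneg, ← neg_sub, sq_sub_sq_sub_sq_sub_sq_eq hx.ne', ← mul_neg, neg_sub,
    mul_nonneg_iff_of_pos_left (by positivity), sub_nonneg]

theorem halfChordSq_nonneg (hx : 0 < x) (hsub : |x - s| ≤ ρ) (hadd : ρ ≤ x + s) :
    0 ≤ halfChordSq ρ s x := by
  obtain ⟨hxs, hsx⟩ := abs_le.1 hsub
  refine sub_nonneg.2 (sq_le_sq' ?_ ?_)
  · rw [radicalAbscissa, le_div_iff₀ (by positivity)]
    nlinarith
  · rw [radicalAbscissa, div_le_iff₀ (by positivity)]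
    nlinarith

end RadicalLine

section Lens

variable {ρ s x : ℝ}

/-- Half the length of the slice over the abscissa `t` of the lens `B(O, ρ) ∩ B((x, 0), s)`. -/
noncomputable def lensHalfHeight (ρ s x t : ℝ) : ℝ := min √(ρ ^ 2 - t ^ 2) √(s ^ 2 - (t - x) ^ 2)

theorem lensHalfHeight_nonneg (ρ s x t : ℝ) : 0 ≤ lensHalfHeight ρ s x t :=
  le_min (Real.sqrt_nonneg _) (Real.sqrt_nonneg _)

theorem continuous_lensHalfHeight (ρ s x : ℝ) : Continuous (lensHalfHeight ρ s x) := by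
  unfold lensHalfHeight
  fun_prop

theorem integrable_lensHalfHeight (ρ s x : ℝ) : Integrable (lensHalfHeight ρ s x) :=
  (integrable_sqrt_sq_sub_sq ρ).inf ((integrable_sqrt_sq_sub_sq s).comp_sub_right x)

theorem mem_ball_pc (hs : 0 ≤ s) {p : EuclideanSpace ℝ (Fin 2)} :
    p ∈ ball (pc x) s ↔ (p 0 - x) ^ 2 + p 1 ^ 2 < s ^ 2 := by
  rw [mem_ball_iff_norm, ← sq_lt_sq₀ (norm_nonneg _) hs, EuclideanSpace.real_norm_sq_eq,
    Fin.sum_univ_two]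
  simp [pc]

theorem mem_ball_inter_ball_iff_abs_lt (hρ : 0 ≤ ρ) (hs : 0 ≤ s) {p : EuclideanSpace ℝ (Fin 2)} :
    p ∈ ball (0 : EuclideanSpace ℝ (Fin 2)) ρ ∩ ball (pc x) s ↔
      |p 1| < lensHalfHeight ρ s x (p 0) := by
  have mem_disc (r t : ℝ) : t ^ 2 + p 1 ^ 2 < r ^ 2 ↔ |p 1| < √(r ^ 2 - t ^ 2) := by
    rw [Real.lt_sqrt (abs_nonneg _), sq_abs, lt_sub_iff_add_lt']
  rw [mem_inter_iff, EuclideanSpace.ball_zero_eq ρ hρ, mem_ofPred_eq, Fin.sum_univ_two,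
    mem_ball_pc hs, mem_disc, mem_disc, lensHalfHeight, lt_min_iff]

theorem measureReal_ball_inter_ball_eq_integral (hρ : 0 ≤ ρ) (hs : 0 ≤ s) (x : ℝ) :
    volume.real (ball (0 : EuclideanSpace ℝ (Fin 2)) ρ ∩ ball (pc x) s) =
      2 * ∫ t, lensHalfHeight ρ s x t := by
  set h := lensHalfHeight ρ s x
  have h_nonneg : ∀ t, 0 ≤ h t := lensHalfHeight_nonneg ρ s x
  have h_int : Integrable h := integrable_lensHalfHeight ρ s x
  have h_meas : Measurable h := (continuous_lensHalfHeight ρ s x).measurable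
  have coords := (volume_preserving_finTwoArrow ℝ).comp
    (EuclideanSpace.volume_preserving_symm_measurableEquiv_toLp (Fin 2))
  have lens_eq : ball (0 : EuclideanSpace ℝ (Fin 2)) ρ ∩ ball (pc x) s =
      (MeasurableEquiv.finTwoArrow ∘ (MeasurableEquiv.toLp 2 (Fin 2 → ℝ)).symm) ⁻¹'
        regionBetween (-h) h univ := by
    ext p
    rw [mem_ball_inter_ball_iff_abs_lt hρ hs, abs_lt]
    simp [regionBetween, h]
  have region_area : volume.real (regionBetween (-h) h univ) = ∫ t, 2 * h t := by
    rw [measureReal_def, Measure.volume_eq_prod, volume_regionBetween_eq_integral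
      h_int.neg.integrableOn h_int.integrableOn MeasurableSet.univ
      fun t _ ↦ neg_le_self (h_nonneg t), setIntegral_univ, sub_neg_eq_add, ← two_mul]
    exact ENNReal.toReal_ofReal (integral_nonneg fun t ↦ mul_nonneg zero_le_two (h_nonneg t))
  rw [lens_eq, coords.measureReal_preimage
    (measurableSet_regionBetween h_meas.neg h_meas MeasurableSet.univ).nullMeasurableSet,
    region_area, integral_const_mul]

theorem setIntegral_Iic_lensHalfHeight (hx : 0 < x) :
    ∫ t in Iic (radicalAbscissa ρ s x), lensHalfHeight ρ s x t =
      ∫ t in Ioi (radicalAbscissa s ρ x), √(s ^ 2 - t ^ 2) := by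
  have reflect_Ici : (x - ·) ⁻¹' Ici (radicalAbscissa s ρ x) = Iic (radicalAbscissa ρ s x) := by
    rw [preimage_const_sub_Ici, ← eq_sub_of_add_eq (radicalAbscissa_add_comm hx.ne')]
  calc ∫ t in Iic (radicalAbscissa ρ s x), lensHalfHeight ρ s x t
    _ = ∫ t in Iic (radicalAbscissa ρ s x), √(s ^ 2 - (x - t) ^ 2) := by
      refine setIntegral_congr_fun measurableSet_Iic fun t ht ↦ ?_
      rw [← neg_sub t x, neg_sq]
      exact min_eq_right
        (Real.sqrt_le_sqrt ((sq_sub_sq_le_iff_le_radicalAbscissa hx t).2 (mem_Iic.1 ht)))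
    _ = ∫ t in Ici (radicalAbscissa s ρ x), √(s ^ 2 - t ^ 2) := by
      rw [← reflect_Ici]
      exact (volume.measurePreserving_sub_left x).setIntegral_preimage_emb
        (measurableEmbedding_subLeft x) (fun t ↦ √(s ^ 2 - t ^ 2)) _
    _ = ∫ t in Ioi (radicalAbscissa s ρ x), √(s ^ 2 - t ^ 2) := integral_Ici_eq_integral_Ioi

theorem setIntegral_Ioi_lensHalfHeight (hx : 0 < x) :
    ∫ t in Ioi (radicalAbscissa ρ s x), lensHalfHeight ρ s x t =
      ∫ t in Ioi (radicalAbscissa ρ s x), √(ρ ^ 2 - t ^ 2) :=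
  setIntegral_congr_fun measurableSet_Ioi fun t ht ↦ min_eq_left
    (Real.sqrt_le_sqrt ((sq_sub_sq_le_iff_radicalAbscissa_le hx t).2 (mem_Ioi.1 ht).le))

theorem measureReal_ball_inter_ball (hρ : 0 ≤ ρ) (hs : 0 ≤ s) (hx : 0 < x) :
    volume.real (ball (0 : EuclideanSpace ℝ (Fin 2)) ρ ∩ ball (pc x) s) =
      circularSegmentArea ρ (radicalAbscissa ρ s x) +
        circularSegmentArea s (radicalAbscissa s ρ x) := by
  have h_int := integrable_lensHalfHeight ρ s x
  rw [measureReal_ball_inter_ball_eq_integral hρ hs, ← intervalIntegral.integral_Iic_add_Ioi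
    h_int.integrableOn h_int.integrableOn (b := radicalAbscissa ρ s x),
    setIntegral_Iic_lensHalfHeight hx, setIntegral_Ioi_lensHalfHeight hx,
    circularSegmentArea, circularSegmentArea]
  ring

theorem hasDerivAt_measureReal_ball_inter_ball (hρ : 0 ≤ ρ) (hs : 0 ≤ s) (hx : 0 < x) :
    HasDerivAt (fun x ↦ volume.real (ball (0 : EuclideanSpace ℝ (Fin 2)) ρ ∩ ball (pc x) s))
      (-(2 * √(halfChordSq ρ s x))) x := by
  have hm := (differentiableAt_radicalAbscissa (ρ := ρ) (s := s) hx.ne').hasDerivAt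
  have hm' := (differentiableAt_radicalAbscissa (ρ := s) (s := ρ) hx.ne').hasDerivAt
  have deriv_add : deriv (radicalAbscissa ρ s) x + deriv (radicalAbscissa s ρ) x = 1 := by
    refine (hm.add hm').unique ((hasDerivAt_id x).congr_of_eventuallyEq ?_)
    filter_upwards [eventually_ne_nhds hx.ne'] with z hz using radicalAbscissa_add_comm hz
  have segments := ((hasDerivAt_circularSegmentArea ρ _).comp x hm).add
    ((hasDerivAt_circularSegmentArea s _).comp x hm')
  rw [← halfChordSq, ← halfChordSq, halfChordSq_comm (ρ := s) hx.ne', ← mul_add, deriv_add,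
    mul_one] at segments
  refine segments.congr_of_eventuallyEq ?_
  filter_upwards [lt_mem_nhds hx] with z hz using measureReal_ball_inter_ball hρ hs hz

end Lens

theorem measureReal_annulus_inter {E : Type*} [NormedAddCommGroup E] [NormedSpace ℝ E]
    [FiniteDimensional ℝ E] [MeasurableSpace E] [BorelSpace E] (μ : Measure E) [μ.IsAddHaarMeasure]
    {R Q : ℝ} (hRQ : R ≤ Q) (hQ : Q ≠ 0) (T : Set E) :
    μ.real ({p | R ≤ ‖p‖ ∧ ‖p‖ ≤ Q} ∩ T) = μ.real (ball 0 Q ∩ T) - μ.real (ball 0 R ∩ T) := by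
  have closedBall_ae_eq : (closedBall 0 Q : Set E) =ᵐ[μ] ball 0 Q := by
    rw [← interior_closedBall (0 : E) hQ]
    exact (interior_ae_eq_of_null_frontier
      ((convex_closedBall (0 : E) Q).addHaar_frontier μ)).symm
  have annulus_inter : {p | R ≤ ‖p‖ ∧ ‖p‖ ≤ Q} ∩ T = (closedBall 0 Q ∩ T) \ ball 0 R := by
    ext p
    simp only [mem_inter_iff, mem_ofPred_eq, mem_sdiff, mem_closedBall_zero_iff,
      mem_ball_zero_iff, not_lt]
    tauto
  have inner_inter : ball 0 R ∩ T = (closedBall 0 Q ∩ T) ∩ ball 0 R := by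
    rw [inter_right_comm, inter_eq_right.2 ((ball_subset_ball hRQ).trans ball_subset_closedBall)]
  have bounded : μ (closedBall 0 Q ∩ T) ≠ ⊤ :=
    measure_ne_top_of_subset inter_subset_left measure_closedBall_lt_top.ne
  rw [annulus_inter, inner_inter, ← measureReal_congr (closedBall_ae_eq.inter (.refl _ T))]
  exact eq_sub_of_add_eq (measureReal_sdiff_add_inter measurableSet_ball bounded)

theorem hasDerivAt_measureReal_annulus_inter_ball {R Q s x : ℝ} (hR : 0 ≤ R) (hRQ : R < Q)
    (hs : 0 ≤ s) (hx : 0 < x) :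
    HasDerivAt (fun x ↦ volume.real
        ({p : EuclideanSpace ℝ (Fin 2) | R ≤ ‖p‖ ∧ ‖p‖ ≤ Q} ∩ ball (pc x) s))
      (2 * (√(halfChordSq R s x) - √(halfChordSq Q s x))) x := by
  have hQ : 0 < Q := hR.trans_lt hRQ
  simp_rw [measureReal_annulus_inter volume hRQ.le hQ.ne']
  refine ((hasDerivAt_measureReal_ball_inter_ball hQ.le hs hx).sub
    (hasDerivAt_measureReal_ball_inter_ball hR hs hx)).congr_deriv ?_
  ring

section Monotonicity

variable {R Q s x : ℝ}

theorem halfChordSq_sub_halfChordSq (hx : x ≠ 0) :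
    halfChordSq R s x - halfChordSq Q s x =
      (Q ^ 2 - R ^ 2) * ((R ^ 2 + Q ^ 2 - 2 * s ^ 2) / x ^ 2 - 2) / 4 := by
  unfold halfChordSq radicalAbscissa
  field_simp
  ring

theorem halfChordSq_le_halfChordSq_iff (hRQ : R ^ 2 < Q ^ 2) (hx : x ≠ 0) :
    halfChordSq Q s x ≤ halfChordSq R s x ↔ 2 * (x ^ 2 + s ^ 2) ≤ R ^ 2 + Q ^ 2 := by
  rw [← sub_nonneg, halfChordSq_sub_halfChordSq hx, mul_div_assoc,
    mul_nonneg_iff_of_pos_left (sub_pos.2 hRQ), le_div_iff₀ four_pos, zero_mul, sub_nonneg,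
    le_div_iff₀ (by positivity)]
  constructor <;> intro h <;> linarith

theorem antitoneOn_halfChordSq_sub_halfChordSq (hRQ : R ^ 2 ≤ Q ^ 2)
    (hs : 2 * s ^ 2 ≤ R ^ 2 + Q ^ 2) :
    AntitoneOn (fun x ↦ halfChordSq R s x - halfChordSq Q s x) (Ioi 0) := by
  intro x (hx : 0 < x) y (hy : 0 < y) hxy
  have : 0 ≤ Q ^ 2 - R ^ 2 := sub_nonneg.2 hRQ
  have : 0 ≤ R ^ 2 + Q ^ 2 - 2 * s ^ 2 := sub_nonneg.2 hs
  simp only [halfChordSq_sub_halfChordSq hx.ne', halfChordSq_sub_halfChordSq hy.ne']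
  gcongr

theorem antitoneOn_radicalAbscissa (ρ s : ℝ) :
    AntitoneOn (radicalAbscissa ρ s) {x | 0 < x ∧ x ^ 2 + s ^ 2 ≤ ρ ^ 2} := by
  rintro x ⟨hx, -⟩ y ⟨hy, hyρ⟩ hxy
  have hxyρ : x * y ≤ ρ ^ 2 - s ^ 2 := by nlinarith
  rw [radicalAbscissa, radicalAbscissa, div_le_div_iff₀ (by positivity) (by positivity)]
  nlinarith [mul_nonneg (sub_nonneg.2 hxy) (sub_nonneg.2 hxyρ)]

theorem radicalAbscissa_nonneg {ρ : ℝ} (hx : 0 ≤ x) (h : s ^ 2 ≤ x ^ 2 + ρ ^ 2) :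
    0 ≤ radicalAbscissa ρ s x :=
  div_nonneg (sub_nonneg.2 h) (by positivity)

theorem monotoneOn_halfChordSq (ρ s : ℝ) :
    MonotoneOn (halfChordSq ρ s) {x | 0 < x ∧ x ^ 2 + s ^ 2 ≤ ρ ^ 2} := by
  intro x hx y hy hxy
  have h_nonneg : 0 ≤ radicalAbscissa ρ s y := radicalAbscissa_nonneg hy.1.le (by nlinarith [hy.2])
  exact sub_le_sub_left (pow_le_pow_left₀ h_nonneg (antitoneOn_radicalAbscissa ρ s hx hy hxy) 2) _

theorem sqrt_sub_sqrt_le_sqrt_sub_sqrt {a b a' b' : ℝ} (hb : 0 ≤ b) (hbb' : b ≤ b') (hba' : b' ≤ a')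
    (h : a' - b' ≤ a - b) : √a' - √b' ≤ √a - √b := by
  have conj {u v : ℝ} (hu : 0 ≤ u) (hv : 0 ≤ v) : (√u - √v) * (√u + √v) = u - v := by
    rw [mul_comm, ← sq_sub_sq, Real.sq_sqrt hu, Real.sq_sqrt hv]
  have hb' : 0 ≤ b' := hb.trans hbb'
  have hba : b ≤ a := by linarith
  by_contra! hlt
  have sqrt_b_le : √b ≤ √b' := Real.sqrt_le_sqrt hbb'
  have sum_lt : √a + √b < √a' + √b' := by linarith
  refine h.not_gt ?_
  calc a - b = (√a - √b) * (√a + √b) := (conj (hb.trans hba) hb).symm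
    _ < (√a' - √b') * (√a' + √b') :=
      mul_lt_mul'' hlt sum_lt (sub_nonneg.2 (Real.sqrt_le_sqrt hba)) (by positivity)
    _ = a' - b' := conj (hb'.trans hba') hb'

end Monotonicity

/-- With `γ c = vol(A_{R,Q} ∩ B((c,0),s))`, if `0 < c ≤ c'` both lie in the
region where the ball meets both boundary circles, and `γ' c > 0` and `γ' c' > 0`, then
`γ' c ≥ γ' c'`. -/
theorem gamma_deriv_antitone
    (R Q s c c' : ℝ) (hR : 0 < R) (hRQ : R < Q) (hs : 0 < s)
    (hc : 0 < c) (hcc' : c ≤ c')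
    (h1 : Q < c + s) (h2 : s - c < R) (h3 : c - s < R)
    (h1' : Q < c' + s) (h2' : s - c' < R) (h3' : c' - s < R)
    (γ : ℝ → ℝ)
    (hγ : ∀ x, γ x =
      (volume ({p : EuclideanSpace ℝ (Fin 2) | R ≤ ‖p‖ ∧ ‖p‖ ≤ Q} ∩ ball (pc x) s)).toReal)
    (hpos : 0 < deriv γ c) (hpos' : 0 < deriv γ c') :
    deriv γ c' ≤ deriv γ c := by
  have hc' : 0 < c' := hc.trans_le hcc'
  have hRQ_sq : R ^ 2 < Q ^ 2 := pow_lt_pow_left₀ hRQ hR.le two_ne_zero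
  have deriv_eq : ∀ x, 0 < x → deriv γ x = 2 * (√(halfChordSq R s x) - √(halfChordSq Q s x)) :=
    fun x hx ↦ funext hγ ▸ (hasDerivAt_measureReal_annulus_inter_ball hR.le hRQ hs.le hx).deriv
  rw [deriv_eq c hc, deriv_eq c' hc']
  rw [deriv_eq c' hc'] at hpos'
  have chord_le : halfChordSq Q s c' ≤ halfChordSq R s c' :=
    (Real.sqrt_monotone.reflect_lt (by linarith)).le
  have hsum : 2 * (c' ^ 2 + s ^ 2) ≤ R ^ 2 + Q ^ 2 :=
    (halfChordSq_le_halfChordSq_iff hRQ_sq hc'.ne').1 chord_le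
  have outer_nonneg : 0 ≤ halfChordSq Q s c :=
    halfChordSq_nonneg hc (abs_le.2 ⟨by linarith, by linarith⟩) h1.le
  have outer_le : halfChordSq Q s c ≤ halfChordSq Q s c' :=
    monotoneOn_halfChordSq Q s ⟨hc, by nlinarith⟩ ⟨hc', by linarith⟩ hcc'
  have diff_le : halfChordSq R s c' - halfChordSq Q s c' ≤
      halfChordSq R s c - halfChordSq Q s c :=
    antitoneOn_halfChordSq_sub_halfChordSq hRQ_sq.le (by nlinarith) hc hc' hcc'
  exact mul_le_mul_of_nonneg_left
    (sqrt_sub_sqrt_le_sqrt_sub_sqrt outer_nonneg outer_le chord_le diff_le) zero_le_two
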